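/- Let m and n be odd positive integers with m ≡ 0 (mod 3) and with 3 dividing n exactly once (that is, 3 ∣ n and 9 ∤ n). Then 3 divides the class number of the quadratic field ℚ(√(−(m²n² + 4n)/3)). -/

import Mathlib

/-!
Put `D = m² n / 27`. The cubic `X³ - X² - D` has discriminant `-(27 D² + 4 D)`, a square in `K`,
so a root of it generates a cyclic cubic extension `L / K`. For a cubic `X³ + b X² + c X + d` with
roots `x, y, z` one has `b² - 3 c = (y - x)² + (z - y) (z - x)`, so a nontrivial element of the
inertia group at a prime `P` forces `b² - 3 c ∈ P`; here `b² - 3 c = 1`, hence `L / K` is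
unramified.

The class number of `K` is then divisible by `3` by Hilbert's Theorem 94. If it were not, an
invariant principal ideal of `𝓞 L`, which comes from `𝓞 K` as `L / K` is unramified, would have a
generator in `𝓞 K`. By Hilbert 90, and since the unit group of `K` is finite of order prime to
`3`, `σ - 1` would then be surjective on the norm-one units of `L`. As `(σ - 1)³` is divisible by
`3`, those units would form a finitely generated `3`-divisible group, hence a finite one, whereas
`L` has infinitely many units.
-/

open NumberField
open scoped Pointwise

section FreeAction

variable {G S : Type*} [Group G] [CommRing S] [MulSemiringAction G S]

theorem eq_top_of_forall_smul_sub_mem (hG : ∀ P : Ideal S, P.IsMaximal → P.inertia G = ⊥)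
    {g : G} (hg : g ≠ 1) {I : Ideal S} (hI : ∀ x : S, g • x - x ∈ I) : I = ⊤ := by
  by_contra hI_top
  obtain ⟨P, hP, hIP⟩ := Ideal.exists_le_maximal I hI_top
  have hg_mem : g ∈ P.inertia G := fun x => hIP (hI x)
  rw [hG P hP, Subgroup.mem_bot] at hg_mem
  exact hg hg_mem

/- Dedekind's independence of characters, with values modulo `J'`. -/
theorem mul_mem_of_forall_add_sum_mul_smul_mem {ι : Type*}
    (hG : ∀ P : Ideal S, P.IsMaximal → P.inertia G = ⊥) {J J' : Ideal S} {s : Finset ι}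
    {γ : ι → G} (hγ : ∀ i ∈ s, γ i ≠ 1) {c₀ : S} {c : ι → S}
    (h : ∀ x ∈ J, c₀ * x + ∑ i ∈ s, c i * γ i • x ∈ J') {x : S} (hx : x ∈ J) : c₀ * x ∈ J' := by
  classical
  induction s using Finset.induction_on generalizing c₀ c with
  | empty => simpa using h x hx
  | insert a s has ih =>
    rw [Finset.forall_mem_insert] at hγ
    have cancel_a (y : S) : ∀ x ∈ J, c₀ * (y - γ a • y) * x +
        ∑ i ∈ s, c i * (γ i • y - γ a • y) * γ i • x ∈ J' := by
      intro x hx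
      convert J'.sub_mem (h (y * x) (J.mul_mem_left y hx)) (J'.mul_mem_left (γ a • y) (h x hx))
        using 1
      simp only [Finset.sum_insert has, smul_mul', mul_add, Finset.mul_sum, mul_sub, sub_mul,
        Finset.sum_sub_distrib]
      ring_nf
    have colon_eq_top : J'.colon {c₀ * x} = ⊤ :=
      eq_top_of_forall_smul_sub_mem hG hγ.1 fun y => by
        rw [Submodule.mem_colon_singleton, smul_eq_mul, ← neg_mem_iff]
        convert ih hγ.2 (cancel_a y) using 1
        ring
    rw [Ideal.eq_top_iff_one, Submodule.mem_colon_singleton, one_smul] at colon_eq_top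
    exact colon_eq_top

theorem map_comap_algebraMap_of_smul_eq [Finite G] {R : Type*} [CommRing R] [Algebra R S]
    [Algebra.IsInvariant R S G] (hG : ∀ P : Ideal S, P.IsMaximal → P.inertia G = ⊥) {J : Ideal S}
    (hJ : ∀ g : G, g • J = J) : (J.comap (algebraMap R S)).map (algebraMap R S) = J := by
  classical
  have := Fintype.ofFinite G
  refine le_antisymm Ideal.map_comap_le fun x hx => ?_
  set J' := (J.comap (algebraMap R S)).map (algebraMap R S)
  have trace_mem : ∀ x ∈ J, ∑ g : G, g • x ∈ J' := by
    intro x hx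
    have sum_fixed (h : G) : h • ∑ g : G, g • x = ∑ g : G, g • x := by
      simp only [Finset.smul_sum, smul_smul]
      exact Fintype.sum_equiv (Equiv.mulLeft h) _ _ fun _ => rfl
    obtain ⟨r, hr⟩ := Algebra.IsInvariant.isInvariant (A := R) _ sum_fixed
    rw [← hr]
    refine Ideal.mem_map_of_mem _ (Ideal.mem_comap.mpr ?_)
    rw [hr]
    exact J.sum_mem fun g _ => by simpa only [hJ g] using Ideal.smul_mem_pointwise_smul g x J hx
  rw [← one_mul x]
  refine mul_mem_of_forall_add_sum_mul_smul_mem hG (s := Finset.univ.erase 1) (γ := id)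
    (c := 1) (fun g hg => Finset.ne_of_mem_erase hg) (fun y hy => ?_) hx
  simpa only [Pi.one_apply, one_mul, id, one_smul,
    ← Finset.add_sum_erase _ (fun g : G => g • y) (Finset.mem_univ 1)] using trace_mem y hy

theorem exists_associated_algebraMap_of_smul_span_eq [Finite G] {R : Type*} [CommRing R]
    [IsDedekindDomain R] [Finite (ClassGroup R)] [IsDomain S] [Algebra R S]
    [Module.FaithfullyFlat R S] [Algebra.IsInvariant R S G]
    (hG : ∀ P : Ideal S, P.IsMaximal → P.inertia G = ⊥)
    (hcop : (Nat.card G).Coprime (Nat.card (ClassGroup R))) {a : S}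
    (ha : ∀ g : G, g • Ideal.span {a} = Ideal.span {a}) :
    ∃ b : R, Associated (algebraMap R S b) a := by
  have := Fintype.ofFinite G
  have := Fintype.ofFinite (ClassGroup R)
  set I : Ideal R := (Ideal.span {a}).comap (algebraMap R S)
  have map_I : I.map (algebraMap R S) = Ideal.span {a} := map_comap_algebraMap_of_smul_eq hG ha
  obtain ⟨r, hr⟩ := Algebra.IsInvariant.isInvariant (A := R) _ (Finset.smul_prod_perm (G := G) a)
  have map_pow : (I ^ Nat.card G).map (algebraMap R S) =
      (Ideal.span {r}).map (algebraMap R S) := by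
    have span_smul (g : G) : Ideal.span {g • a} = Ideal.span {a} := by
      rw [← ha g, Ideal.pointwise_smul_def, Ideal.map_span, Set.image_singleton]
      rfl
    rw [Ideal.map_pow, map_I, Ideal.map_span, Set.image_singleton, hr,
      ← Ideal.prod_span_singleton, Finset.prod_congr rfl fun g _ => span_smul g,
      Finset.prod_const, Finset.card_univ, Nat.card_eq_fintype_card]
  have pow_principal : (I ^ Nat.card G).IsPrincipal := by
    rw [← Ideal.comap_map_eq_self_of_faithfullyFlat (B := S) (I ^ Nat.card G), map_pow,
      Ideal.comap_map_eq_self_of_faithfullyFlat]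
    exact ⟨r, rfl⟩
  rw [Nat.card_eq_fintype_card (α := ClassGroup R)] at hcop
  obtain ⟨b, hb⟩ := Ideal.IsPrincipal.of_isPrincipal_pow_of_coprime hcop pow_principal
  refine ⟨b, Ideal.span_singleton_eq_span_singleton.mp ?_⟩
  rw [← map_I, hb, Ideal.submodule_span_eq, Ideal.map_span, Set.image_singleton]

/- Hilbert 90 via the resolvent `∑ i, (∏ j < i, gʲ u) * gⁱ x`. -/
theorem exists_ne_zero_mul_smul_eq_of_prod_pow_smul_eq_one [Nontrivial S]
    (hG : ∀ P : Ideal S, P.IsMaximal → P.inertia G = ⊥) {g : G} (hg : IsOfFinOrder g) {u : S}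
    (hu : ∏ j ∈ Finset.range (orderOf g), g ^ j • u = 1) : ∃ x : S, x ≠ 0 ∧ u * g • x = x := by
  set c : ℕ → S := fun i => ∏ j ∈ Finset.range i, g ^ j • u
  have c_succ (i : ℕ) : c (i + 1) = u * g • c i := by
    simp only [c, Finset.prod_range_succ', Finset.smul_prod', smul_smul, ← pow_succ', pow_zero,
      one_smul, mul_comm u]
  have c_zero : c 0 = 1 := Finset.prod_range_zero _
  obtain ⟨n, hn⟩ : ∃ n, orderOf g = n + 1 := Nat.exists_eq_add_one.mpr hg.orderOf_pos
  obtain ⟨y, hy⟩ : ∃ y : S, ∑ i ∈ Finset.range (orderOf g), c i * g ^ i • y ≠ 0 := by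
    by_contra! hsum
    have one_mem : (1 : S) * 1 ∈ (⊥ : Ideal S) :=
      mul_mem_of_forall_add_sum_mul_smul_mem hG (J := ⊤) (s := Finset.range n)
        (γ := fun i => g ^ (i + 1)) (c := fun i => c (i + 1))
        (fun i hi => pow_ne_one_of_lt_orderOf i.succ_ne_zero
          (by rw [hn]; exact Nat.succ_lt_succ (Finset.mem_range.mp hi)))
        (fun y _ => by
          have := hsum y
          rw [hn, Finset.sum_range_succ', c_zero, pow_zero, one_smul] at this
          rw [add_comm, this]
          exact zero_mem _) trivial
    simp at one_mem
  refine ⟨_, hy, ?_⟩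
  have shift (i : ℕ) : u * g • (c i * g ^ i • y) = c (i + 1) * g ^ (i + 1) • y := by
    rw [smul_mul', ← mul_assoc, ← c_succ, smul_smul, pow_succ']
  have endpoints : c (orderOf g) * g ^ orderOf g • y = c 0 * g ^ 0 • y := by
    rw [c_zero, pow_orderOf_eq_one, pow_zero]
    exact congrArg (· * _) hu
  simp only [Finset.smul_sum, Finset.mul_sum, shift]
  rw [← add_left_inj (c 0 * g ^ 0 • y),
    ← Finset.sum_range_succ' (fun i => c i * g ^ i • y), Finset.sum_range_succ, endpoints]

theorem exists_unit_mul_smul_eq_of_prod_pow_smul_eq_one [Finite G] {R : Type*} [CommRing R]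
    [IsDedekindDomain R] [Finite (ClassGroup R)] [IsDomain S] [Algebra R S]
    [Module.FaithfullyFlat R S] [SMulCommClass G R S] [Algebra.IsInvariant R S G]
    (hG : ∀ P : Ideal S, P.IsMaximal → P.inertia G = ⊥)
    (hcop : (Nat.card G).Coprime (Nat.card (ClassGroup R)))
    {g : G} (hg : ∀ h, h ∈ Subgroup.zpowers g) {u : Sˣ}
    (hu : ∏ j ∈ Finset.range (orderOf g), g ^ j • (u : S) = 1) :
    ∃ v : Sˣ, u * g • (v : S) = v := by
  obtain ⟨x, hx, hux⟩ := exists_ne_zero_mul_smul_eq_of_prod_pow_smul_eq_one hG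
    (isOfFinOrder_of_finite g) hu
  have g_mem : g ∈ MulAction.stabilizer G (Ideal.span {x}) := by
    rw [MulAction.mem_stabilizer_iff, Ideal.pointwise_smul_def, Ideal.map_span,
      Set.image_singleton, Ideal.span_singleton_eq_span_singleton]
    exact ⟨u, by rwa [mul_comm]⟩
  obtain ⟨b, v, hv⟩ := exists_associated_algebraMap_of_smul_span_eq (R := R) hG hcop
    fun h => Subgroup.zpowers_le.mpr g_mem (hg h)
  refine ⟨v, mul_left_cancel₀ (left_ne_zero_of_mul (hv ▸ hx)) ?_⟩
  have g_b : g • algebraMap R S b = algebraMap R S b := smul_algebraMap g b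
  rw [hv, ← hux, ← hv, smul_mul', g_b]
  ring

end FreeAction

theorem finite_of_pow_prime_eq_one_of_surjective_sub_one {M : Type*} [AddCommGroup M]
    [Module.Finite ℤ M] {p : ℕ} (hp : p.Prime) {σ : Module.End ℤ M} (hσ : σ ^ p = 1)
    (hsurj : Function.Surjective ⇑(σ - 1)) : Finite M := by
  obtain ⟨r, hr⟩ := (Commute.one_right (σ - 1)).exists_add_pow_prime_eq hp
  have sub_one_pow : (σ - 1) ^ p = -(p * ((σ - 1) * r)) := by
    rw [sub_add_cancel, hσ, one_pow, mul_one, mul_assoc] at hr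
    rw [eq_neg_iff_add_eq_zero, ← add_left_inj 1, zero_add, add_right_comm, ← hr]
  have le_smul : (⊤ : Submodule ℤ M) ≤ Ideal.span {(p : ℤ)} • ⊤ := by
    intro x _
    obtain ⟨y, rfl⟩ := (Module.End.coe_pow (σ - 1) p ▸ hsurj.iterate p) x
    rw [sub_one_pow, LinearMap.neg_apply, Module.End.mul_apply, Module.End.natCast_apply,
      ← natCast_zsmul]
    exact neg_mem (Submodule.smul_mem_smul (Ideal.mem_span_singleton_self _) trivial)
  obtain ⟨k, hk, hkM⟩ := Submodule.exists_sub_one_mem_and_smul_eq_zero_of_fg_of_le_smul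
    (Ideal.span {(p : ℤ)}) ⊤ Module.Finite.fg_top le_smul
  have k_ne_zero : k ≠ 0 := by
    rintro rfl
    rw [zero_sub, Ideal.mem_span_singleton, dvd_neg] at hk
    exact hp.not_dvd_one (Int.natCast_dvd_natCast.mp hk)
  exact Module.finite_of_fg_torsion M fun {x} =>
    ⟨⟨k, mem_nonZeroDivisors_of_ne_zero k_ne_zero⟩, hkM x trivial⟩

section Hilbert94

variable {K L : Type*} [Field K] [NumberField K] [Field L] [NumberField L] [Algebra K L]
  [IsGalois K L]

theorem algebraMap_norm_eq_prod_pow_smul {g : Gal(L/K)} (hg : ∀ h, h ∈ Subgroup.zpowers g)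
    (x : 𝓞 L) : algebraMap (𝓞 K) (𝓞 L) (RingOfIntegers.norm K x) =
      ∏ j ∈ Finset.range (orderOf g), g ^ j • x := by
  classical
  rw [← Finset.prod_image (f := fun h : Gal(L/K) => h • x)
    (by simpa using pow_injOn_Iio_orderOf), IsCyclic.image_range_orderOf hg]
  ext
  rw [RingOfIntegers.coe_algebraMap_norm, Algebra.norm_eq_prod_automorphisms]
  exact (map_prod (algebraMap (𝓞 L) L) (fun h : Gal(L/K) => h • x) Finset.univ).symm

attribute [local instance] Units.mulDistribMulActionRight

theorem exists_smul_eq_mul_and_map_norm_eq_one {g : Gal(L/K)} (hg : ∀ h, h ∈ Subgroup.zpowers g)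
    (hunram : ∀ P : Ideal (𝓞 L), P.IsMaximal → P.inertia Gal(L/K) = ⊥)
    (hclass : (Module.finrank K L).Coprime (classNumber K))
    (hunits : (Nat.card (𝓞 K)ˣ).Coprime (Module.finrank K L)) {u : (𝓞 L)ˣ}
    (hu : Units.map (RingOfIntegers.norm K) u = 1) :
    ∃ v : (𝓞 L)ˣ, g • v = u * v ∧ Units.map (RingOfIntegers.norm K) v = 1 := by
  have : IsGaloisGroup Gal(L/K) (𝓞 K) (𝓞 L) :=
    IsGaloisGroup.of_isFractionRing Gal(L/K) (𝓞 K) (𝓞 L) K L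
  have : SMulCommClass Gal(L/K) (𝓞 K) (𝓞 L) := IsGaloisGroup.commutes
  have : Algebra.IsInvariant (𝓞 K) (𝓞 L) Gal(L/K) := IsGaloisGroup.isInvariant
  have norm_inv : RingOfIntegers.norm K ((u⁻¹ : (𝓞 L)ˣ) : 𝓞 L) = 1 := by
    rw [← inv_eq_one, ← map_inv] at hu
    exact congrArg Units.val hu
  obtain ⟨w, hw⟩ := exists_unit_mul_smul_eq_of_prod_pow_smul_eq_one (R := 𝓞 K) hunram
    (by rwa [IsGalois.card_aut_eq_finrank, Nat.card_eq_fintype_card]) hg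
    (by rw [← algebraMap_norm_eq_prod_pow_smul hg, norm_inv, map_one])
  replace hw : g • w = u * w := by
    rw [← inv_mul_eq_iff_eq_mul]
    exact Units.ext hw
  obtain ⟨y, hy⟩ := hunits.pow_left_bijective.surjective (Units.map (RingOfIntegers.norm K) w)⁻¹
  refine ⟨Units.map (algebraMap (𝓞 K) (𝓞 L)) y * w, ?_, ?_⟩
  · have g_y : g • Units.map (algebraMap (𝓞 K) (𝓞 L) : 𝓞 K →* 𝓞 L) y =
        Units.map (algebraMap (𝓞 K) (𝓞 L) : 𝓞 K →* 𝓞 L) y := Units.ext (smul_algebraMap g _)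
    rw [smul_mul', g_y, hw, mul_left_comm]
  · have norm_y : Units.map (RingOfIntegers.norm K)
        (Units.map (algebraMap (𝓞 K) (𝓞 L) : 𝓞 K →* 𝓞 L) y) = y ^ Module.finrank K L :=
      Units.ext (RingOfIntegers.norm_algebraMap K _)
    rw [map_mul, norm_y, ← eq_inv_iff_mul_eq_one]
    exact hy

theorem dvd_classNumber_of_forall_inertia_eq_bot {p : ℕ} (hp : p.Prime)
    (hL : Module.finrank K L = p)
    (hunram : ∀ P : Ideal (𝓞 L), P.IsMaximal → P.inertia Gal(L/K) = ⊥)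
    (hunits : (Nat.card (𝓞 K)ˣ).Coprime p) [Infinite (𝓞 L)ˣ] : p ∣ classNumber K := by
  by_contra hdvd
  have card_gal : Nat.card Gal(L/K) = p := (IsGalois.card_aut_eq_finrank K L).trans hL
  have : Fact p.Prime := ⟨hp⟩
  obtain ⟨g, hg⟩ := isCyclic_of_prime_card card_gal
  let ν : Additive (𝓞 L)ˣ →ₗ[ℤ] Additive (𝓞 K)ˣ :=
    (Units.map (RingOfIntegers.norm K)).toAdditive.toIntLinearMap
  let ρ := Representation.ofMulDistribMulAction Gal(L/K) (𝓞 L)ˣ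
  have ν_ρ (x : Additive (𝓞 L)ˣ) : ν (ρ g x) = ν x :=
    congrArg Additive.ofMul (Units.ext (RingOfIntegers.ext (Algebra.norm_eq_of_algEquiv g _)))
  have ker_le : LinearMap.ker ν ≤ (LinearMap.ker ν).comap (ρ g) := fun x hx => by
    rwa [Submodule.mem_comap, LinearMap.mem_ker, ν_ρ]
  have finite_ker : Finite (LinearMap.ker ν) := by
    refine finite_of_pow_prime_eq_one_of_surjective_sub_one hp
      (σ := (ρ g).restrict ker_le) ?_ ?_
    · rw [Module.End.pow_restrict]
      ext x
      rw [LinearMap.coe_restrict_apply, ← map_pow, ← card_gal, pow_card_eq_one', map_one]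
      rfl
    · rintro ⟨u, hu⟩
      obtain ⟨v, hguv, hv⟩ := exists_smul_eq_mul_and_map_norm_eq_one hg hunram
        (hL ▸ hp.coprime_iff_not_dvd.mpr hdvd) (hL ▸ hunits) hu
      refine ⟨⟨Additive.ofMul v, hv⟩, Subtype.ext ?_⟩
      exact sub_eq_of_eq_add hguv
  have : Finite (𝓞 K)ˣ := Nat.finite_of_card_ne_zero fun h => by
    rw [h, Nat.coprime_zero_left] at hunits
    exact hp.ne_one hunits
  have : Finite (Additive (𝓞 L)ˣ) :=
    ν.toAddMonoidHom.finite_iff_finite_ker_range.mpr ⟨finite_ker, inferInstance⟩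
  exact not_finite (Additive (𝓞 L)ˣ)

end Hilbert94

section Cubic

open Polynomial

theorem sq_sub_three_mul_mem_of_mem_inertia {G S : Type*} [Group G] [CommRing S] [IsDomain S]
    [MulSemiringAction G S] {I : Ideal S} {g : G} (hg : g ∈ I.inertia G) {b c d t : S}
    (hb : g • b = b) (hc : g • c = c) (hd : g • d = d)
    (ht : t ^ 3 + b * t ^ 2 + c * t + d = 0) (hgt : g • t ≠ t) (hggt : g • g • t ≠ t) :
    b ^ 2 - 3 * c ∈ I := by
  have smul_root {x : S} (hx : x ^ 3 + b * x ^ 2 + c * x + d = 0) :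
      (g • x) ^ 3 + b * (g • x) ^ 2 + c * (g • x) + d = 0 := by
    simpa only [smul_add, smul_mul', smul_pow', hb, hc, hd, smul_zero] using congrArg (g • ·) hx
  have quotient_root {x : S} (hxt : x ≠ t) (hx : x ^ 3 + b * x ^ 2 + c * x + d = 0) :
      x ^ 2 + x * t + t ^ 2 + b * (x + t) + c = 0 := by
    refine (mul_eq_zero.mp ?_).resolve_left (sub_ne_zero.mpr hxt)
    linear_combination hx - ht
  have quotient_gt := quotient_root hgt (smul_root ht)
  have quotient_ggt := quotient_root hggt (smul_root (smul_root ht))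
  have sum_roots : t + g • t + g • g • t + b = 0 := by
    have hne : g • g • t ≠ g • t := fun h => hgt (smul_left_cancel g h)
    refine (mul_eq_zero.mp ?_).resolve_left (sub_ne_zero.mpr hne)
    linear_combination quotient_ggt - quotient_gt
  have eq_combination : b ^ 2 - 3 * c = (g • t - t) * (g • t - t) +
      (g • g • t - g • t) * (g • g • t - t) := by
    linear_combination (b - g • g • t + 2 * (g • t) + 2 * t) * sum_roots - 3 * quotient_gt
  rw [eq_combination]
  exact I.add_mem (I.mul_mem_left _ (hg t)) (I.mul_mem_right _ (hg (g • t)))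

theorem splits_toPoly_of_isRoot_of_isSquare_discr {F : Type*} [Field F] [NeZero (2 : F)]
    {P : Cubic F} (ha : P.a ≠ 0) (hsep : P.toPoly.Separable) (hdiscr : IsSquare P.discr) {t : F}
    (ht : P.toPoly.IsRoot t) : P.toPoly.Splits := by
  have deriv_ne_zero : P.toPoly.derivative.eval t ≠ 0 := hsep.eval₂_derivative_ne_zero (.id F) ht
  have hd : P.d = -(P.a * t ^ 3 + P.b * t ^ 2 + P.c * t) := by
    have ht_eval : P.a * t ^ 3 + P.b * t ^ 2 + P.c * t + P.d = 0 := by simpa [Cubic.toPoly] using ht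
    linear_combination ht_eval
  have discrim_mul : discrim P.a (P.a * t + P.b) (P.a * t ^ 2 + P.b * t + P.c) *
      P.toPoly.derivative.eval t ^ 2 = P.discr := by
    have deriv_eval : P.toPoly.derivative.eval t = 3 * P.a * t ^ 2 + 2 * P.b * t + P.c := by
      simp only [Cubic.toPoly, derivative_add, derivative_mul, derivative_C, derivative_X_pow,
        derivative_X, eval_add, eval_mul, eval_C, eval_pow, eval_X, eval_zero, eval_one]
      push_cast
      ring
    rw [deriv_eval, Cubic.discr, hd, discrim]
    ring
  obtain ⟨δ, hδ⟩ := hdiscr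
  obtain ⟨s, hs⟩ := exists_quadratic_eq_zero ha ⟨δ / P.toPoly.derivative.eval t, by
    rw [div_mul_div_comm, ← hδ, ← discrim_mul, ← sq,
      mul_div_cancel_right₀ _ (pow_ne_zero 2 deriv_ne_zero)]⟩
  have factorization : P.toPoly =
      (X - C t) * (C P.a * X ^ 2 + C (P.a * t + P.b) * X + C (P.a * t ^ 2 + P.b * t + P.c)) := by
    simp only [Cubic.toPoly, hd, map_add, map_mul, map_pow, map_neg]
    ring
  rw [factorization]
  exact (Splits.X_sub_C t).mul
    (Splits.of_natDegree_eq_two (natDegree_quadratic ha) (x := s) (by simpa [sq] using hs))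

theorem cubic_discr_map {R S : Type*} [Ring R] [Ring S] (φ : R →+* S) (P : Cubic R) :
    (P.map φ).discr = φ P.discr := by
  simp only [Cubic.discr, Cubic.map, map_add, map_sub, map_mul, map_pow, map_ofNat]

theorem isGalois_adjoinRoot_toPoly {F : Type*} [Field F] [NeZero (2 : F)] {P : Cubic F}
    [Fact (Irreducible P.toPoly)] (ha : P.a ≠ 0) (hsep : P.toPoly.Separable)
    (hdiscr : IsSquare P.discr) : IsGalois F (AdjoinRoot P.toPoly) := by
  let φ := algebraMap F (AdjoinRoot P.toPoly)
  have : NeZero (2 : AdjoinRoot P.toPoly) :=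
    ⟨map_ofNat φ 2 ▸ (map_ne_zero φ).mpr two_ne_zero⟩
  have root_isRoot : (P.map φ).toPoly.IsRoot (AdjoinRoot.root P.toPoly) := by
    rw [Cubic.map_toPoly]
    exact AdjoinRoot.isRoot_root _
  have splits_map : (P.map φ).toPoly.Splits := by
    refine splits_toPoly_of_isRoot_of_isSquare_discr ((map_ne_zero φ).mpr ha) ?_ ?_ root_isRoot
    · rw [Cubic.map_toPoly]
      exact hsep.map
    · rw [cubic_discr_map]
      exact hdiscr.map φ
  have : P.toPoly.IsSplittingField F (AdjoinRoot P.toPoly) := by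
    refine ⟨Cubic.map_toPoly (φ := φ) ▸ splits_map, ?_⟩
    rw [eq_top_iff, ← AdjoinRoot.adjoinRoot_eq_top]
    refine Algebra.adjoin_mono (Set.singleton_subset_iff.mpr ?_)
    rw [mem_rootSet]
    exact ⟨hsep.ne_zero, AdjoinRoot.eval₂_root _⟩
  exact IsGalois.of_separable_splitting_field hsep

theorem irreducible_map_algebraMap_of_natDegree_eq_three {F K : Type*} [Field F] [Field K]
    [Algebra F K] [FiniteDimensional F K] (hK : ¬ 3 ∣ Module.finrank F K) {f : F[X]}
    (hf : Irreducible f) (hdeg : f.natDegree = 3) : Irreducible (f.map (algebraMap F K)) := by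
  refine irreducible_of_degree_le_three_of_not_isRoot (by simp [hdeg]) fun x hx => hK ?_
  rw [IsRoot, eval_map_algebraMap] at hx
  rw [← hdeg, ← natDegree_mul_leadingCoeff_inv f hf.ne_zero, minpoly.eq_of_irreducible hf hx]
  exact minpoly.degree_dvd (Algebra.IsIntegral.isIntegral x)

theorem irreducible_map_rat_of_forall_not_isRoot {f : ℤ[X]} (hf : f.Monic)
    (hdeg : f.natDegree = 3) (hroot : ∀ r : ℤ, ¬ f.IsRoot r) :
    Irreducible (f.map (algebraMap ℤ ℚ)) := by
  rw [← hf.irreducible_iff_irreducible_map_fraction_map,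
    hf.irreducible_iff_roots_eq_zero_of_degree_le_three (by lia) (by lia)]
  exact Multiset.eq_zero_of_forall_notMem fun r hr => hroot r (isRoot_of_mem_roots hr)

end Cubic

theorem exists_sq_eq_neg_three_of_three_dvd_card_units {R : Type*} [CommRing R] [IsDomain R]
    [Finite Rˣ] (h : 3 ∣ Nat.card Rˣ) : ∃ x : R, x ^ 2 = -3 := by
  have : Fact (Nat.Prime 3) := ⟨Nat.prime_three⟩
  obtain ⟨z, hz⟩ := exists_prime_orderOf_dvd_card' 3 h
  have z_ne_one : (z : R) ≠ 1 := fun h => by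
    rw [Units.val_eq_one.mp h, orderOf_one] at hz
    norm_num at hz
  have z_cubed : (z : R) ^ 3 = 1 := by
    rw [← Units.val_pow_eq_pow_val, ← hz, pow_orderOf_eq_one, Units.val_one]
  have cyclotomic : (z : R) ^ 2 + z + 1 = 0 :=
    (mul_eq_zero.mp (by linear_combination z_cubed)).resolve_left (sub_ne_zero.mpr z_ne_one)
  exact ⟨2 * z + 1, by linear_combination 4 * cyclotomic⟩

theorem isSquare_or_isSquare_or_isSquare_mul {F E : Type*} [Field F] [NeZero (2 : F)] [Field E]
    [Algebra F E] (hE : Module.finrank F E = 2) {a b : F} {x y : E} (hx : x ^ 2 = algebraMap F E a)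
    (hy : y ^ 2 = algebraMap F E b) : IsSquare a ∨ IsSquare b ∨ IsSquare (a * b) := by
  by_cases hxF : x ∈ (algebraMap F E).range
  · obtain ⟨q, rfl⟩ := hxF
    rw [← map_pow] at hx
    exact .inl ⟨q, by rw [← sq, (algebraMap F E).injective hx]⟩
  have x_eq {p q : F} (h : algebraMap F E p * x = algebraMap F E q) : p = 0 := by
    by_contra hp
    refine hxF ⟨q / p, ?_⟩
    rw [map_div₀, ← h, mul_div_cancel_left₀ _ ((map_ne_zero _).mpr hp)]
  have indep : LinearIndependent F ![1, x] := by
    refine LinearIndependent.pair_iff.mpr fun q p h => ?_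
    simp only [Algebra.smul_def, mul_one] at h
    have hp : p = 0 := x_eq (q := -q) (by rw [map_neg]; linear_combination h)
    subst hp
    simpa using h
  have y_mem : y ∈ Submodule.span F (Set.range ![1, x]) := by
    rw [indep.span_eq_top_of_card_eq_finrank (by simp [hE])]
    trivial
  rw [Matrix.range_cons_cons_empty, Submodule.mem_span_pair] at y_mem
  obtain ⟨q, p, rfl⟩ := y_mem
  simp only [Algebra.smul_def, mul_one] at hy
  have two_mul_q_mul_p : 2 * q * p = 0 := by
    refine x_eq (q := b - q ^ 2 - p ^ 2 * a) ?_
    simp only [map_mul, map_sub, map_pow, map_ofNat]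
    linear_combination hy - algebraMap F E p ^ 2 * hx
  have b_eq : b = q ^ 2 + p ^ 2 * a := by
    apply (algebraMap F E).injective
    have cross_eq_zero := congrArg (algebraMap F E) two_mul_q_mul_p
    simp only [map_mul, map_add, map_pow, map_ofNat, map_zero] at cross_eq_zero ⊢
    linear_combination algebraMap F E p ^ 2 * hx - hy + x * cross_eq_zero
  rcases mul_eq_zero.mp two_mul_q_mul_p with h | rfl
  · have hq : q = 0 := (mul_eq_zero.mp h).resolve_left two_ne_zero
    exact .inr (.inr ⟨p * a, by rw [b_eq, hq]; ring⟩)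
  · exact .inr (.inl ⟨q, by rw [b_eq]; ring⟩)

theorem not_isSquare_eighty_one_mul_sq_add_twelve_mul {D : ℤ} (hD : D ≠ 0) :
    ¬ IsSquare (81 * D ^ 2 + 12 * D) := by
  rintro ⟨r, hr⟩
  rcases hD.lt_or_gt with hD | hD
  · have lower : |9 * D + 1| < |r| := sq_lt_sq.mp (by linarith)
    have upper : |r| < |9 * D| := sq_lt_sq.mp (by linarith)
    rw [abs_of_neg (a := 9 * D + 1) (by lia)] at lower
    rw [abs_of_neg (a := 9 * D) (by lia)] at upper
    lia
  · have lower : |9 * D| < |r| := sq_lt_sq.mp (by linarith)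
    have upper : |r| < |9 * D + 1| := sq_lt_sq.mp (by linarith)
    rw [abs_of_pos (a := 9 * D) (by lia)] at lower
    rw [abs_of_pos (a := 9 * D + 1) (by lia)] at upper
    lia

section Units

variable {K : Type*} [Field K] [NumberField K]

theorem finite_units_iff_rank_eq_zero : Finite (𝓞 K)ˣ ↔ Units.rank K = 0 := by
  rw [← Units.finrank_eq, Module.finrank_eq_zero_iff_isTorsion]
  refine ⟨fun _ => ?_, fun h => ?_⟩
  · exact isAddTorsion_iff_isTorsion_int.mp isAddTorsion_of_finite
  · exact Module.finite_of_fg_torsion (Additive (𝓞 K)ˣ) h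

theorem infinite_units_of_two_lt_finrank (hK : 2 < Module.finrank ℚ K) : Infinite (𝓞 K)ˣ := by
  have card_places := InfinitePlace.card_eq_nrRealPlaces_add_nrComplexPlaces K
  have places_eq_rank := InfinitePlace.card_add_two_mul_card_eq_rank K
  rw [← not_finite_iff_infinite, finite_units_iff_rank_eq_zero, Units.rank]
  lia

theorem finite_units_of_isTotallyComplex [IsTotallyComplex K] (hK : Module.finrank ℚ K = 2) :
    Finite (𝓞 K)ˣ := by
  have card_places := InfinitePlace.card_eq_nrRealPlaces_add_nrComplexPlaces K
  have places_eq_rank := InfinitePlace.card_add_two_mul_card_eq_rank K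
  have no_real_places := IsTotallyComplex.nrRealPlaces_eq_zero (K := K)
  rw [finite_units_iff_rank_eq_zero, Units.rank]
  lia

theorem isTotallyComplex_of_sq_eq {a : ℚ} (ha : a < 0) {β : K}
    (hβ : β ^ 2 = algebraMap ℚ K a) : IsTotallyComplex K := by
  refine ⟨fun v => InfinitePlace.not_isReal_iff_isComplex.mp fun hv => ?_⟩
  have embedding_sq : InfinitePlace.embedding_of_isReal hv β ^ 2 = a := by
    rw [← map_pow, hβ, eq_ratCast, map_ratCast]
  have ha' : (a : ℝ) < 0 := Rat.cast_lt_zero.mpr ha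
  linarith [sq_nonneg (InfinitePlace.embedding_of_isReal hv β)]

theorem coprime_card_units_three_of_sq_eq_neg (hK : Module.finrank ℚ K = 2) {a : ℤ} (ha : 0 < a)
    (h3a : ¬ IsSquare (3 * a)) {β : K} (hβ : β ^ 2 = -a) : (Nat.card (𝓞 K)ˣ).Coprime 3 := by
  have neg_a_lt : (-a : ℚ) < 0 := neg_lt_zero.mpr (Int.cast_pos.mpr ha)
  have hβ' : β ^ 2 = algebraMap ℚ K (-a) := by simpa using hβ
  have := isTotallyComplex_of_sq_eq neg_a_lt hβ'
  have := finite_units_of_isTotallyComplex hK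
  rw [Nat.coprime_comm, Nat.prime_three.coprime_iff_not_dvd]
  intro hdvd
  obtain ⟨x, hx⟩ := exists_sq_eq_neg_three_of_three_dvd_card_units hdvd
  rcases isSquare_or_isSquare_or_isSquare_mul hK (b := -3) hβ'
    (y := x) (by rw [← map_pow, hx]; simp [map_ofNat (algebraMap (𝓞 K) K)]) with h | h | h
  · exact neg_a_lt.not_ge h.nonneg
  · exact absurd h.nonneg (by norm_num)
  · refine h3a (Rat.isSquare_intCast_iff.mp ?_)
    rwa [neg_mul_neg, mul_comm, ← Int.cast_ofNat, ← Int.cast_mul] at h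

end Units

section CubicExtension

open Polynomial

variable {K L : Type*} [Field K] [NumberField K] [Field L] [NumberField L]

theorem inertia_eq_bot_of_cubic [Algebra K L] [IsGalois K L] (hL : Module.finrank K L = 3)
    {b c d : 𝓞 K} {t : 𝓞 L} (ht : t ^ 3 + algebraMap (𝓞 K) (𝓞 L) b * t ^ 2 +
      algebraMap (𝓞 K) (𝓞 L) c * t + algebraMap (𝓞 K) (𝓞 L) d = 0)
    (hgen : ∀ g : Gal(L/K), g • t = t → g = 1) (hunit : IsUnit (b ^ 2 - 3 * c))
    {P : Ideal (𝓞 L)} (hP : P ≠ ⊤) : P.inertia Gal(L/K) = ⊥ := by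
  rw [eq_bot_iff]
  intro g hg
  by_contra hg_one
  rw [Subgroup.mem_bot] at hg_one
  have sq_ne_one : g ^ 2 ≠ 1 := fun h => hg_one (by
    have cube : g ^ 3 = 1 := by rw [← hL, ← IsGalois.card_aut_eq_finrank K L, pow_card_eq_one']
    rwa [pow_succ, h, one_mul] at cube)
  refine hP (P.eq_top_of_isUnit_mem ?_ (hunit.map (algebraMap (𝓞 K) (𝓞 L))))
  rw [map_sub, map_pow, map_mul, map_ofNat]
  exact sq_sub_three_mul_mem_of_mem_inertia hg (smul_algebraMap g b) (smul_algebraMap g c)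
    (smul_algebraMap g d) ht (fun h => hg_one (hgen g h))
    (fun h => sq_ne_one (hgen _ (by rwa [sq, mul_smul])))

theorem three_dvd_classNumber_of_aeval_cubic_eq_zero [Algebra K L] [IsGalois K L]
    (hL : Module.finrank K L = 3) {P : Cubic (𝓞 K)} (ha : P.a = 1)
    (hunit : IsUnit (P.b ^ 2 - 3 * P.c)) {θ : L} (hθ : aeval θ P.toPoly = 0)
    (hgen : ∀ g : Gal(L/K), g θ = θ → g = 1) (hunits : (Nat.card (𝓞 K)ˣ).Coprime 3) :
    3 ∣ classNumber K := by
  have : Infinite (𝓞 L)ˣ := infinite_units_of_two_lt_finrank (by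
    rw [← Module.finrank_mul_finrank ℚ K, hL]
    have := Module.finrank_pos (R := ℚ) (M := K)
    lia)
  have integral : IsIntegral (𝓞 K) θ := ⟨P.toPoly, Cubic.monic_of_a_eq_one ha, hθ⟩
  let t : 𝓞 L := ⟨θ, isIntegral_trans θ integral⟩
  have t_root : t ^ 3 + algebraMap (𝓞 K) (𝓞 L) P.b * t ^ 2 +
      algebraMap (𝓞 K) (𝓞 L) P.c * t + algebraMap (𝓞 K) (𝓞 L) P.d = 0 := by
    have θ_root : θ ^ 3 + algebraMap (𝓞 K) L P.b * θ ^ 2 + algebraMap (𝓞 K) L P.c * θ +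
        algebraMap (𝓞 K) L P.d = 0 := by simpa [Cubic.toPoly, ha] using hθ
    exact RingOfIntegers.ext θ_root
  exact dvd_classNumber_of_forall_inertia_eq_bot Nat.prime_three hL
    (fun I hI => inertia_eq_bot_of_cubic hL t_root
      (fun g hg => hgen g (congrArg (algebraMap (𝓞 L) L) hg)) hunit hI.ne_top) hunits

theorem three_dvd_classNumber_of_cubic {P : Cubic (𝓞 K)} (ha : P.a = 1)
    (hirr : Irreducible (P.map (algebraMap (𝓞 K) K)).toPoly)
    (hdiscr : IsSquare (algebraMap (𝓞 K) K P.discr)) (hunit : IsUnit (P.b ^ 2 - 3 * P.c))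
    (hunits : (Nat.card (𝓞 K)ˣ).Coprime 3) : 3 ∣ classNumber K := by
  set Q := P.map (algebraMap (𝓞 K) K)
  have Q_a_ne_zero : Q.a ≠ 0 := by simp [Q, Cubic.map, ha]
  have : Fact (Irreducible Q.toPoly) := ⟨hirr⟩
  have : IsGalois K (AdjoinRoot Q.toPoly) :=
    isGalois_adjoinRoot_toPoly Q_a_ne_zero hirr.separable (by rwa [cubic_discr_map])
  have : FiniteDimensional K (AdjoinRoot Q.toPoly) := (AdjoinRoot.powerBasis hirr.ne_zero).finite
  have : NumberField (AdjoinRoot Q.toPoly) := NumberField.of_module_finite K _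
  have finrank_eq : Module.finrank K (AdjoinRoot Q.toPoly) = 3 := by
    rw [(AdjoinRoot.powerBasis hirr.ne_zero).finrank, AdjoinRoot.powerBasis_dim,
      Cubic.natDegree_of_a_ne_zero Q_a_ne_zero]
  have root_eq : aeval (AdjoinRoot.root Q.toPoly) P.toPoly = 0 := by
    rw [← aeval_map_algebraMap K, ← Cubic.map_toPoly]
    exact AdjoinRoot.eval₂_root _
  exact three_dvd_classNumber_of_aeval_cubic_eq_zero finrank_eq ha hunit root_eq
    (fun g hg => AlgEquiv.coe_toAlgHom_injective (AdjoinRoot.algHom_ext hg)) hunits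

theorem three_dvd_classNumber_of_sq_eq_neg {D : ℤ} (hD : ∀ r : ℤ, r ^ 3 - r ^ 2 ≠ D)
    (hK : Module.finrank ℚ K = 2) {β : K} (hβ : β ^ 2 = -(27 * D ^ 2 + 4 * D)) :
    3 ∣ classNumber K := by
  have D_ne_zero : D ≠ 0 := fun h => hD 0 (by simp [h])
  have pos : 0 < 27 * D ^ 2 + 4 * D := by
    rcases D_ne_zero.lt_or_gt with h | h <;> nlinarith
  let P : Cubic ℤ := ⟨1, -1, 0, -D⟩
  have P_irreducible : Irreducible (P.toPoly.map (algebraMap ℤ ℚ)) :=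
    irreducible_map_rat_of_forall_not_isRoot (Cubic.monic_of_a_eq_one rfl)
      (Cubic.natDegree_of_a_ne_zero one_ne_zero) fun r hr => hD r (by
        have r_root : r ^ 3 + -r ^ 2 + -D = 0 := by simpa [P, Cubic.toPoly] using hr
        linarith)
  refine three_dvd_classNumber_of_cubic (P := P.map (algebraMap ℤ (𝓞 K))) (by simp [P, Cubic.map])
    ?_ ⟨β, ?_⟩ (by simp [P, Cubic.map]) ?_
  · have := irreducible_map_algebraMap_of_natDegree_eq_three (K := K) (by simp [hK])
      P_irreducible (by
        rw [(Cubic.monic_of_a_eq_one rfl).natDegree_map, Cubic.natDegree_of_a_ne_zero one_ne_zero])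
    rwa [Cubic.map_toPoly, Cubic.map_toPoly, Polynomial.map_map,
      Subsingleton.elim (RingHom.comp _ _) ((algebraMap ℚ K).comp (algebraMap ℤ ℚ)),
      ← Polynomial.map_map]
  · have discr_P : P.discr = -(27 * D ^ 2 + 4 * D) := by
      simp only [P, Cubic.discr]
      ring
    rw [cubic_discr_map, discr_P, ← sq, hβ, eq_intCast, map_intCast]
    push_cast
    ring
  · refine coprime_card_units_three_of_sq_eq_neg hK pos ?_ (by simpa using hβ)
    convert not_isSquare_eighty_one_mul_sq_add_twelve_mul D_ne_zero using 2
    ring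

end CubicExtension

theorem class_number_div_three_of_sqrt_neg_sq_sq_add_four_mul_div_three_general
    (m n : ℤ) (h27 : 27 ∣ m ^ 2 * n) (hroot : ∀ r : ℤ, 27 * (r ^ 3 - r ^ 2) ≠ m ^ 2 * n)
    (K : Type*) [Field K] [NumberField K] (hdeg : Module.finrank ℚ K = 2)
    (hsqrt : ∃ α : K, α ^ 2 = -((m : K) ^ 2 * (n : K) ^ 2 + 4 * (n : K)) / 3) :
    3 ∣ NumberField.classNumber K := by
  obtain ⟨D, hD⟩ := h27
  obtain ⟨α, hα⟩ := hsqrt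
  refine three_dvd_classNumber_of_sq_eq_neg (D := D) (β := m * α / 3) (fun r hr => ?_) hdeg ?_
  · exact hroot r (by rw [hr, hD])
  · have hD' : (m : K) ^ 2 * n = 27 * D := mod_cast hD
    rw [div_pow, mul_pow, hα]
    linear_combination (-(m ^ 2 * n) / 27 - D - 4 / 27 : K) * hD'

/-- Let `m` and `n` be odd positive integers with `m ≡ 0 (mod 3)` and with `3` dividing `n`
exactly once.  Then `3` divides the class number of `ℚ(√(-(m² n² + 4 n) / 3))`. -/
theorem class_number_div_three_of_sqrt_neg_sq_sq_add_four_mul_div_three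
    (m n : ℤ) (hm : 0 < m) (hn : 0 < n) (hmodd : Odd m) (hnodd : Odd n)
    (hm3 : 3 ∣ m) (hn3 : 3 ∣ n) (hn9 : ¬ (9 ∣ n))
    (K : Type*) [Field K] [NumberField K] (hdeg : Module.finrank ℚ K = 2)
    (hsqrt : ∃ α : K, α ^ 2 = -((m : K) ^ 2 * (n : K) ^ 2 + 4 * (n : K)) / 3) :
    3 ∣ NumberField.classNumber K := by
  refine class_number_div_three_of_sqrt_neg_sq_sq_add_four_mul_div_three_general m n
    (mul_dvd_mul (pow_dvd_pow_of_dvd hm3 2) hn3) (fun r hr => ?_) K hdeg hsqrt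
  exact Int.not_even_iff_odd.mpr ((hmodd.pow (n := 2)).mul hnodd) (hr ▸ by simp [parity_simps])
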